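/- Let n ≥ 7 be an integer and suppose w_1, w_2, w_3 ∈ ℂ are the roots (with multiplicity) of 4X³ − 2X² − 5X − 2, i.e. 4X³ − 2X² − 5X − 2 = 4(X − w_1)(X − w_2)(X − w_3). Then τ(GP(n,3)) = n · ∏_{s=1}^{3} (T_n(w_s) − 1)/(w_s − 1), as an equality in ℂ with τ(GP(n,3)) cast to ℂ. -/

import Mathlib

open Polynomial

/-- The defining relation for the generalized Petersen graph `GP(n,k)`:
`u_i ~ u_{i+1}`, `u_i ~ v_i`, `v_i ~ v_{i+k}` (indices mod `n`);
`Sum.inl i` is the outer vertex `u_i`, `Sum.inr i` the inner vertex `v_i`. -/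
def gpRel (n k : ℕ) : (ZMod n ⊕ ZMod n) → (ZMod n ⊕ ZMod n) → Prop
  | Sum.inl i, Sum.inl j => j = i + 1
  | Sum.inl i, Sum.inr j => j = i
  | Sum.inr _, Sum.inl _ => False
  | Sum.inr i, Sum.inr j => j = i + (k : ZMod n)

instance (n k : ℕ) : DecidableRel (gpRel n k) := fun a b =>
  match a, b with
  | Sum.inl i, Sum.inl j => inferInstanceAs (Decidable (j = i + 1))
  | Sum.inl i, Sum.inr j => inferInstanceAs (Decidable (j = i))
  | Sum.inr _, Sum.inl _ => inferInstanceAs (Decidable False)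
  | Sum.inr i, Sum.inr j => inferInstanceAs (Decidable (j = i + (k : ZMod n)))

/-- The generalized Petersen graph `GP(n,k)`. -/
def genPetersen (n k : ℕ) : SimpleGraph (ZMod n ⊕ ZMod n) :=
  SimpleGraph.fromRel (gpRel n k)

instance (n k : ℕ) : DecidableRel (genPetersen n k).Adj := fun a b =>
  inferInstanceAs (Decidable (a ≠ b ∧ (gpRel n k a b ∨ gpRel n k b a)))

/-- The number of spanning trees of a graph `G`: the number of subgraphs that
contain all vertices and are trees. -/
noncomputable def numSpanningTrees {V : Type*} (G : SimpleGraph V) : ℕ :=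
  Nat.card {H : G.Subgraph // H.IsSpanning ∧ H.coe.IsTree}

/-!
Fix a root `r`. A spanning tree of `G` is the same thing as a map sending each vertex other than
`r` to a neighbour so that iteration always ends at `r`. Expanding the Laplacian `L` multilinearly
over such choices of neighbours gives the matrix-tree theorem, and hence
`det (L + J) = |V|² τ(G)` for the all-ones matrix `J`.

For `GP(n,k)` the matrix `L + J` consists of four circulant blocks, so the discrete Fourier
transform reduces its determinant to `n` determinants of size two. The one at the frequency
`θ_j = 2πj/n`, `j ≠ 0`, is `(3 - 2 cos θ_j)(3 - 2 cos kθ_j) - 1`, a polynomial in `cos θ_j` with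
roots `1, w_1, …, w_k`. As the numbers `cos θ_j`, `j ≠ 0`, are the roots of `(T_n(x) - 1)/(x - 1)`,
the product over `j` of each factor `w_s - cos θ_j` is a value of this polynomial, and the root `1`
contributes its value `n²` at `x = 1`.
-/

open scoped Matrix

section SpanningTrees

variable {V : Type*} {G : SimpleGraph V} {r : V} {f g : V → V}

/-- The graph of a self-map `f`, joining every `i` with `f i ≠ i` to `f i`. -/
def functionalGraph (f : V → V) : SimpleGraph V :=
  SimpleGraph.fromRel fun i j => f i = j

lemma functionalGraph_adj {i j : V} :
    (functionalGraph f).Adj i j ↔ i ≠ j ∧ (f i = j ∨ f j = i) :=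
  SimpleGraph.fromRel_adj ..

lemma functionalGraph_adj_apply {i : V} (h : f i ≠ i) : (functionalGraph f).Adj i (f i) :=
  functionalGraph_adj.2 ⟨h.symm, .inl rfl⟩

lemma functionalGraph_le_iff : functionalGraph f ≤ G ↔ ∀ i, f i ≠ i → G.Adj i (f i) := by
  refine ⟨fun h i hi => h (functionalGraph_adj_apply hi), fun h i j hij => ?_⟩
  obtain ⟨hne, rfl | rfl⟩ := functionalGraph_adj.1 hij
  · exact h i hne.symm
  · exact (h j hne).symm

lemma functionalGraph_reachable_iterate (f : V → V) (k : ℕ) (i : V) :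
    (functionalGraph f).Reachable i (f^[k] i) := by
  induction k with
  | zero => exact .refl _
  | succ k ih =>
    rw [Function.iterate_succ_apply']
    by_cases h : f (f^[k] i) = f^[k] i
    · rwa [h]
    · exact ih.trans (functionalGraph_adj_apply h).reachable

/-- `f` is the parent map of a tree rooted at `r`: it fixes `r`, and iterating it leads from every
vertex to `r`. -/
structure IsParentMap (r : V) (f : V → V) : Prop where
  map_root : f r = r
  exists_iterate_eq : ∀ i, ∃ k, f^[k] i = r

lemma IsParentMap.eq_root_of_isPeriodicPt (hf : IsParentMap r f) {m : ℕ} (hm : 0 < m) {i : V}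
    (hi : Function.IsPeriodicPt f m i) : i = r := by
  obtain ⟨k, hk⟩ := hf.exists_iterate_eq i
  calc i = f^[m * k] i := (hi.mul_const k).eq.symm
    _ = f^[m * k - k] (f^[k] i) := by
      rw [← Function.iterate_add_apply, Nat.sub_add_cancel (Nat.le_mul_of_pos_left k hm)]
    _ = r := by rw [hk, Function.iterate_fixed hf.map_root]

lemma IsParentMap.apply_ne (hf : IsParentMap r f) {i : V} (hi : i ≠ r) : f i ≠ i :=
  fun h => hi (hf.eq_root_of_isPeriodicPt one_pos h)

lemma IsParentMap.exists_depth (hf : IsParentMap r f) : ∃ d : V → ℕ, ∀ i ≠ r, d (f i) < d i := by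
  classical
  refine ⟨fun i => Nat.find (hf.exists_iterate_eq i), fun i hi => ?_⟩
  have hspec := Nat.find_spec (hf.exists_iterate_eq i)
  rcases hdepth : Nat.find (hf.exists_iterate_eq i) with _ | k <;> rw [hdepth] at hspec
  · exact absurd hspec hi
  · have hle : Nat.find (hf.exists_iterate_eq (f i)) ≤ k := Nat.find_min' _ hspec
    exact (Nat.lt_succ_of_le hle).trans_eq hdepth.symm

lemma IsParentMap.functionalGraph_connected (hf : IsParentMap r f) :
    (functionalGraph f).Connected := by
  have reachable_root (i : V) : (functionalGraph f).Reachable i r := by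
    obtain ⟨k, hk⟩ := hf.exists_iterate_eq i
    exact hk ▸ functionalGraph_reachable_iterate f k i
  have : Nonempty V := ⟨r⟩
  exact ⟨fun i j => (reachable_root i).trans (reachable_root j).symm⟩

lemma IsParentMap.functionalGraph_isTree [Finite V] (hf : IsParentMap r f) :
    (functionalGraph f).IsTree := by
  have edges_subset : (functionalGraph f).edgeSet ⊆ (fun i => s(i, f i)) '' {r}ᶜ := by
    refine Sym2.ind fun i j (hij : (functionalGraph f).Adj i j) => ?_
    obtain ⟨hne, rfl | rfl⟩ := functionalGraph_adj.1 hij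
    · exact ⟨i, fun h => hne (by rw [h, hf.map_root]), rfl⟩
    · exact ⟨j, fun h => hne (by rw [h, hf.map_root]), Sym2.eq_swap⟩
  have card_edges_le : Nat.card (functionalGraph f).edgeSet ≤ ({r}ᶜ : Set V).ncard :=
    (Set.ncard_le_ncard edges_subset).trans Set.ncard_image_le
  have card_compl := Set.ncard_add_ncard_compl {r}
  have card_le := hf.functionalGraph_connected.card_vert_le_card_edgeSet_add_one
  rw [Set.ncard_singleton] at card_compl
  exact SimpleGraph.isTree_iff_connected_and_card.2 ⟨hf.functionalGraph_connected, by omega⟩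

lemma IsParentMap.eq_of_functionalGraph_eq (hf : f r = r) (hg : IsParentMap r g)
    (h : functionalGraph f = functionalGraph g) : f = g := by
  have agree_of_iterate_eq (k : ℕ) : ∀ i, g^[k] i = r → f i = g i := by
    induction k with
    | zero => rintro i rfl; exact hf.trans hg.map_root.symm
    | succ k ih =>
      intro i hi
      rcases eq_or_ne i r with rfl | hir
      · exact hf.trans hg.map_root.symm
      have hadj : (functionalGraph f).Adj i (g i) := h ▸ functionalGraph_adj_apply (hg.apply_ne hir)
      obtain ⟨-, hfi | hfgi⟩ := functionalGraph_adj.1 hadj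
      · exact hfi
      · have two_cycle : g (g i) = i := (ih (g i) hi).symm.trans hfgi
        exact absurd (hg.eq_root_of_isPeriodicPt two_pos two_cycle) hir
  funext i
  obtain ⟨k, hk⟩ := hg.exists_iterate_eq i
  exact agree_of_iterate_eq k i hk

lemma exists_adj_dist_lt (hG : G.Connected) {i : V} (hi : i ≠ r) :
    ∃ j, G.Adj i j ∧ G.dist j r < G.dist i r := by
  obtain ⟨p, hp⟩ := hG.exists_walk_length_eq_dist i r
  cases p with
  | nil => exact absurd rfl hi
  | cons hadj q =>
    rw [SimpleGraph.Walk.length_cons] at hp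
    exact ⟨_, hadj, by have := SimpleGraph.dist_le q; omega⟩

lemma exists_isParentMap_functionalGraph_eq (r : V) (hG : G.IsTree) :
    ∃ f, IsParentMap r f ∧ functionalGraph f = G := by
  classical
  choose! p hadj hdist using fun i => exists_adj_dist_lt (r := r) (i := i) hG.connected
  let f : V → V := Function.update p r r
  have hf_root : f r = r := Function.update_self ..
  have hf_ne {i : V} (hi : i ≠ r) : f i = p i := Function.update_of_ne hi ..
  have iterate_eq (m : ℕ) : ∀ i, G.dist i r ≤ m → ∃ k, f^[k] i = r := by
    induction m with
    | zero => exact fun i hi => ⟨0, hG.connected.dist_eq_zero_iff.1 (Nat.le_zero.1 hi)⟩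
    | succ m ih =>
      intro i hi
      rcases eq_or_ne i r with rfl | hir
      · exact ⟨0, rfl⟩
      obtain ⟨k, hk⟩ := ih (f i) (by have := hdist i hir; rw [hf_ne hir]; omega)
      exact ⟨k + 1, hk⟩
  have hf : IsParentMap r f := ⟨hf_root, fun i => iterate_eq _ i le_rfl⟩
  have hle : functionalGraph f ≤ G := functionalGraph_le_iff.2 fun i hi => by
    have hir : i ≠ r := by rintro rfl; exact hi hf_root
    exact hf_ne hir ▸ hadj i hir
  exact ⟨f, hf, hle.antisymm
    ((SimpleGraph.isTree_iff_minimal_connected.1 hG).2 hf.functionalGraph_connected hle)⟩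

/-- Spanning trees of `G`, a type of subgraphs, as the trees below `G` in the lattice of graphs on
the same vertex set. -/
def spanningTreeEquiv (G : SimpleGraph V) :
    {H : G.Subgraph // H.IsSpanning ∧ H.coe.IsTree} ≃ {T : SimpleGraph V // T ≤ G ∧ T.IsTree} where
  toFun H := ⟨H.1.spanningCoe, H.1.spanningCoe_le,
    (H.1.spanningCoeEquivCoeOfSpanning H.2.1).isTree_iff.2 H.2.2⟩
  invFun T := ⟨SimpleGraph.toSubgraph T.1 T.2.1, SimpleGraph.toSubgraph.isSpanning T.1 T.2.1,
    ((SimpleGraph.toSubgraph T.1 T.2.1).spanningCoeEquivCoeOfSpanning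
      (SimpleGraph.toSubgraph.isSpanning T.1 T.2.1)).isTree_iff.1 T.2.2⟩
  left_inv H := Subtype.ext <|
    SimpleGraph.Subgraph.ext (SimpleGraph.Subgraph.isSpanning_iff.1 H.2.1).symm rfl
  right_inv _ := rfl

theorem numSpanningTrees_eq_card_isParentMap [Finite V] (G : SimpleGraph V) (r : V) :
    numSpanningTrees G = Nat.card {f : V → V // IsParentMap r f ∧ functionalGraph f ≤ G} := by
  rw [numSpanningTrees, Nat.card_congr (spanningTreeEquiv G)]
  refine (Nat.card_congr <| Equiv.ofBijective
    (fun f => ⟨functionalGraph f.1, f.2.2, f.2.1.functionalGraph_isTree⟩) ⟨?_, ?_⟩).symm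
  · intro f g hfg
    exact Subtype.ext (g.2.1.eq_of_functionalGraph_eq f.2.1.map_root (congrArg Subtype.val hfg))
  · rintro ⟨T, hTG, hT⟩
    obtain ⟨f, hf, rfl⟩ := exists_isParentMap_functionalGraph_eq r hT
    exact ⟨⟨f, hf, hTG⟩, rfl⟩

end SpanningTrees

section MatrixTree

variable {V R : Type*} [DecidableEq V] [CommRing R] {r : V} {f : V → V}

/-- The identity matrix minus the matrix of the partial map `f` restricted to the vertices other
than `r`. These are the matrices into which the Laplacian, with row `r` replaced by the `r`-th unit
vector, is expanded by multilinearity in the rows. -/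
def parentMatrix (R : Type*) [CommRing R] (r : V) (f : V → V) : Matrix V V R :=
  Matrix.of fun i => Pi.single i 1 - if i = r then 0 else Pi.single (f i) 1

lemma parentMatrix_apply (i j : V) :
    parentMatrix R r f i j = (if j = i then 1 else 0) - if i ≠ r ∧ j = f i then 1 else 0 := by
  by_cases hi : i = r <;> simp [parentMatrix, Pi.single_apply, hi]

variable [Fintype V]

lemma parentMatrix_mulVec_apply (v : V → R) (i : V) :
    (parentMatrix R r f *ᵥ v) i = v i - if i = r then 0 else v (f i) := by
  have row_eq : parentMatrix R r f i = Pi.single i 1 - if i = r then 0 else Pi.single (f i) 1 := rfl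
  rw [Matrix.mulVec, row_eq, sub_dotProduct, single_one_dotProduct]
  split_ifs <;> simp

lemma IsParentMap.det_parentMatrix (hf : IsParentMap r f) : (parentMatrix R r f).det = 1 := by
  obtain ⟨d, hd⟩ := hf.exists_depth
  have triangular : (parentMatrix R r f).BlockTriangular (OrderDual.toDual ∘ d) := by
    intro i j (hij : d i < d j)
    have hji : j ≠ i := by rintro rfl; exact hij.false
    have hjf : ¬(i ≠ r ∧ j = f i) := by rintro ⟨hi, rfl⟩; exact (hd i hi).not_gt hij
    rw [parentMatrix_apply, if_neg hji, if_neg hjf, sub_zero]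
  have block_eq_one (a : ℕᵒᵈ) :
      (parentMatrix R r f).toSquareBlock (OrderDual.toDual ∘ d) a = 1 := by
    ext ⟨i, hi⟩ ⟨j, hj⟩
    have hij : d i = d j := OrderDual.toDual.injective (hi.trans hj.symm)
    have hjf : ¬(i ≠ r ∧ j = f i) := by rintro ⟨hi, rfl⟩; exact (hd i hi).ne' hij
    rw [Matrix.toSquareBlock_def, Matrix.of_apply, parentMatrix_apply, if_neg hjf, sub_zero,
      Matrix.one_apply]
    simp only [Subtype.mk.injEq, eq_comm]
  rw [triangular.det]
  exact Finset.prod_eq_one fun a _ => by rw [block_eq_one, Matrix.det_one]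

lemma det_parentMatrix_eq_zero {i : V} (hi : ∀ k, f^[k] i ≠ r) : (parentMatrix R r f).det = 0 := by
  classical
  -- The indicator of the vertices that never reach `r` is a kernel vector.
  let v : V → R := fun j => if ∃ k, f^[k] j = r then 0 else 1
  have v_root : v r = 0 := if_pos ⟨0, rfl⟩
  have v_map {j : V} (hj : j ≠ r) : v (f j) = v j := by
    refine if_congr ⟨fun ⟨k, hk⟩ => ⟨k + 1, hk⟩, ?_⟩ rfl rfl
    rintro ⟨_ | k, hk⟩
    · exact absurd hk hj
    · exact ⟨k, hk⟩
  have mulVec_v : parentMatrix R r f *ᵥ v = 0 := by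
    ext j
    rw [parentMatrix_mulVec_apply]
    split_ifs with hj
    · rw [hj, v_root, sub_zero, Pi.zero_apply]
    · rw [v_map hj, sub_self, Pi.zero_apply]
  have det_smul : (parentMatrix R r f).det • v = 0 := by
    rw [← Matrix.one_mulVec v, ← Matrix.smul_mulVec, ← Matrix.adjugate_mul, ← Matrix.mulVec_mulVec,
      mulVec_v, Matrix.mulVec_zero]
  have v_i : v i = 1 := if_neg fun ⟨k, hk⟩ => hi k hk
  simpa [v_i] using congrFun det_smul i

open scoped Classical in
lemma det_parentMatrix (hf : f r = r) :
    (parentMatrix R r f).det = if IsParentMap r f then 1 else 0 := by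
  split_ifs with h
  · exact h.det_parentMatrix
  · obtain ⟨i, hi⟩ : ∃ i, ∀ k, f^[k] i ≠ r := by
      by_contra! hk
      exact h ⟨hf, hk⟩
    exact det_parentMatrix_eq_zero hi

lemma updateRow_lapMatrix (G : SimpleGraph V) [DecidableRel G.Adj] (r : V) :
    (G.lapMatrix R).updateRow r (Pi.single r 1) = Matrix.of fun i =>
      ∑ j ∈ if i = r then {r} else G.neighborFinset i,
        (Pi.single i 1 - if i = r then 0 else Pi.single j 1) := by
  ext i k
  rcases eq_or_ne i r with rfl | hi
  · simp
  · rw [Matrix.updateRow_ne hi]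
    simp [hi, SimpleGraph.lapMatrix, SimpleGraph.degMatrix, Matrix.diagonal_apply,
      SimpleGraph.adjMatrix_apply, Pi.single_apply, eq_comm (a := k)]

theorem adjugate_lapMatrix_apply_self (G : SimpleGraph V) [DecidableRel G.Adj] (r : V) :
    (G.lapMatrix R).adjugate r r = numSpanningTrees G := by
  classical
  let A (i : V) : Finset V := if i = r then {r} else G.neighborFinset i
  have mem_A {f : V → V} : f ∈ Fintype.piFinset A ↔ f r = r ∧ ∀ i ≠ r, G.Adj i (f i) := by
    rw [Fintype.mem_piFinset]
    refine ⟨fun h => ⟨by simpa [A] using h r, fun i hi => by simpa [A, hi] using h i⟩, ?_⟩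
    rintro ⟨hr, hadj⟩ i
    rcases eq_or_ne i r with rfl | hi
    · simpa [A] using hr
    · simpa [A, hi] using hadj i hi
  have parentMap_iff {f : V → V} :
      f ∈ Fintype.piFinset A ∧ IsParentMap r f ↔ IsParentMap r f ∧ functionalGraph f ≤ G := by
    rw [and_comm, and_congr_right_iff]
    intro hf
    have fixed_iff {i : V} : f i ≠ i ↔ i ≠ r :=
      ⟨fun h hi => h (by rw [hi, hf.map_root]), hf.apply_ne⟩
    simp only [mem_A, hf.map_root, functionalGraph_le_iff, fixed_iff, true_and]
  calc (G.lapMatrix R).adjugate r r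
      = ∑ f ∈ Fintype.piFinset A, (parentMatrix R r f).det := by
        rw [Matrix.adjugate_apply, updateRow_lapMatrix]
        exact Matrix.detRowAlternating.toMultilinearMap.map_sum_finset _ A
    _ = ∑ f ∈ Fintype.piFinset A, if IsParentMap r f then 1 else 0 :=
        Finset.sum_congr rfl fun f hf => det_parentMatrix (mem_A.1 hf).1
    _ = numSpanningTrees G := by
        rw [Finset.sum_boole, numSpanningTrees_eq_card_isParentMap G r,
          Nat.card_congr (Equiv.subtypeEquivRight fun f => parentMap_iff.symm),
          Nat.subtype_card _ fun f => Finset.mem_filter]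

end MatrixTree

section ZeroSums

variable {V R : Type*} [Fintype V] [DecidableEq V] [CommRing R]

lemma det_updateCol_one_of_one_vecMul_eq_zero {M : Matrix V V R} (hM : 1 ᵥ* M = 0) (r : V) :
    (M.updateCol r 1).det = Fintype.card V * M.adjugate r r := by
  have col_sums : 1 ᵥ* M.updateCol r 1 = Pi.single r (Fintype.card V : R) := by
    ext j
    rcases eq_or_ne j r with rfl | hj
    · simp [Matrix.vecMul, dotProduct]
    · simpa [Matrix.vecMul, dotProduct, hj] using congrFun hM j
  have adjugate_apply_self (A : Matrix V V R) :
      A.adjugate r r = (A.updateCol r (Pi.single r 1)).det := by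
    rw [← Matrix.cramer_apply, Matrix.cramer_eq_adjugate_mulVec, Matrix.mulVec_single_one,
      Matrix.col_apply]
  calc (M.updateCol r 1).det
      = (1 ᵥ* (M.updateCol r 1 * (M.updateCol r 1).adjugate)) r := by
        simp [Matrix.mul_adjugate, Matrix.vecMul_smul]
    _ = Fintype.card V * M.adjugate r r := by
        rw [← Matrix.vecMul_vecMul, col_sums, Matrix.single_vecMul, Pi.smul_apply, Matrix.row,
          smul_eq_mul, adjugate_apply_self, adjugate_apply_self M, Matrix.updateCol_idem]

lemma det_add_one_of_mulVec_eq_zero {M : Matrix V V R} (hM : M *ᵥ 1 = 0) (r : V) :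
    (M + Matrix.of 1).det = Fintype.card V * (M.updateCol r 1).det := by
  have row_sums : (M + Matrix.of 1) *ᵥ 1 = (Fintype.card V : R) • 1 := by
    rw [Matrix.add_mulVec, hM, zero_add]
    ext i
    simp [Matrix.mulVec, dotProduct]
  have det_updateCol : ((M + Matrix.of 1).updateCol r 1).det = (M.updateCol r 1).det := by
    rw [← Matrix.det_transpose, ← Matrix.det_transpose (M.updateCol r 1)]
    refine Matrix.det_eq_of_forall_row_eq_smul_add_const (fun j => if j = r then 0 else 1) r
      (if_pos rfl) fun j i => ?_
    by_cases hj : j = r <;> simp [hj]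
  calc (M + Matrix.of 1).det
      = (((M + Matrix.of 1).adjugate * (M + Matrix.of 1)) *ᵥ 1) r := by
        simp [Matrix.adjugate_mul, Matrix.smul_mulVec]
    _ = Fintype.card V * (M.updateCol r 1).det := by
        rw [← Matrix.mulVec_mulVec, row_sums, Matrix.mulVec_smul,
          ← Matrix.cramer_eq_adjugate_mulVec, Pi.smul_apply, Matrix.cramer_apply, det_updateCol,
          smul_eq_mul]

theorem det_lapMatrix_add_one [Nonempty V] (G : SimpleGraph V) [DecidableRel G.Adj] :
    (G.lapMatrix R + Matrix.of 1).det = (Fintype.card V : R) ^ 2 * numSpanningTrees G := by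
  obtain ⟨r⟩ := ‹Nonempty V›
  have mulVec_one : G.lapMatrix R *ᵥ 1 = 0 := G.lapMatrix_mulVec_const_eq_zero
  have one_vecMul : 1 ᵥ* G.lapMatrix R = 0 := by
    rw [← Matrix.mulVec_transpose, (SimpleGraph.isSymm_lapMatrix R G).eq, mulVec_one]
  rw [det_add_one_of_mulVec_eq_zero mulVec_one r,
    det_updateCol_one_of_one_vecMul_eq_zero one_vecMul, adjugate_lapMatrix_apply_self]
  ring

end ZeroSums

section Circulant

open scoped ZMod

variable {n : ℕ} [NeZero n]

lemma dft_circulant_mulVec (v Φ : ZMod n → ℂ) :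
    𝓕 (Matrix.circulant v *ᵥ Φ) = 𝓕 v * 𝓕 Φ := by
  ext k
  have shift (i : ZMod n) : ∑ j, ZMod.stdAddChar (-(j * k)) * v (j - i) =
      ZMod.stdAddChar (-(i * k)) * 𝓕 v k := by
    rw [← Equiv.sum_comp (Equiv.addRight i), ZMod.dft_apply, Finset.mul_sum]
    refine Finset.sum_congr rfl fun j _ => ?_
    rw [Equiv.coe_addRight, add_sub_cancel_right, add_mul, neg_add, AddChar.map_add_eq_mul,
      smul_eq_mul]
    ring
  calc 𝓕 (Matrix.circulant v *ᵥ Φ) k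
      = ∑ i, (∑ j, ZMod.stdAddChar (-(j * k)) * v (j - i)) * Φ i := by
        simp only [ZMod.dft_apply, Matrix.mulVec, dotProduct, Matrix.circulant_apply, smul_eq_mul,
          Finset.mul_sum, Finset.sum_mul, mul_assoc]
        exact Finset.sum_comm
    _ = 𝓕 v k * 𝓕 Φ k := by
        rw [ZMod.dft_apply Φ, Finset.mul_sum]
        refine Finset.sum_congr rfl fun i _ => ?_
        rw [shift, smul_eq_mul]
        ring

lemma toMatrix_dft_mul_circulant (v : ZMod n → ℂ) :
    LinearMap.toMatrix' (ZMod.dft (N := n) (E := ℂ)).toLinearMap * Matrix.circulant v =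
      Matrix.diagonal (𝓕 v) * LinearMap.toMatrix' (ZMod.dft (N := n) (E := ℂ)).toLinearMap := by
  refine Matrix.toLin'.injective (LinearMap.ext fun Φ => ?_)
  simp only [Matrix.toLin'_mul, LinearMap.comp_apply, Matrix.toLin'_toMatrix', Matrix.toLin'_apply,
    LinearEquiv.coe_coe]
  ext k
  simp [dft_circulant_mulVec, Matrix.mulVec_diagonal]

lemma det_fromBlocks_diagonal {ι R : Type*} [Fintype ι] [DecidableEq ι] [CommRing R]
    (a b c d : ι → R) :
    (Matrix.fromBlocks (.diagonal a) (.diagonal b) (.diagonal c) (.diagonal d)).det =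
      ∏ i, (a i * d i - b i * c i) := by
  let e : ι ⊕ ι ≃ Fin 2 × ι :=
    (Equiv.boolProdEquivSum ι).symm.trans (finTwoEquiv.symm.prodCongr (.refl ι))
  have eq_submatrix :
      Matrix.fromBlocks (.diagonal a) (.diagonal b) (.diagonal c) (.diagonal d) =
        (Matrix.blockDiagonal fun i => !![a i, b i; c i, d i]).submatrix e e := by
    ext (i | i) (j | j) <;> simp [e, finTwoEquiv, Matrix.blockDiagonal_apply, Matrix.diagonal_apply]
  simp only [eq_submatrix, Matrix.det_submatrix_equiv_self, Matrix.det_blockDiagonal,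
    Matrix.det_fin_two_of]

theorem det_fromBlocks_circulant (t u v w : ZMod n → ℂ) :
    (Matrix.fromBlocks (.circulant t) (.circulant u) (.circulant v) (.circulant w)).det =
      ∏ k, (𝓕 t k * 𝓕 w k - 𝓕 u k * 𝓕 v k) := by
  let F := LinearMap.toMatrix' (ZMod.dft (N := n) (E := ℂ)).toLinearMap
  have det_F : F.det ≠ 0 := by
    rw [LinearMap.det_toMatrix']
    exact (LinearEquiv.isUnit_det' _).ne_zero
  have conj : Matrix.fromBlocks F 0 0 F *
      Matrix.fromBlocks (.circulant t) (.circulant u) (.circulant v) (.circulant w) =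
      Matrix.fromBlocks (.diagonal (𝓕 t)) (.diagonal (𝓕 u)) (.diagonal (𝓕 v)) (.diagonal (𝓕 w)) *
        Matrix.fromBlocks F 0 0 F := by
    simp only [Matrix.fromBlocks_multiply, F, toMatrix_dft_mul_circulant, zero_mul, mul_zero,
      add_zero, zero_add]
  have det_conj := congrArg Matrix.det conj
  rw [Matrix.det_mul, Matrix.det_mul, mul_comm, det_fromBlocks_diagonal] at det_conj
  refine mul_right_cancel₀ ?_ det_conj
  rw [Matrix.det_fromBlocks_zero₂₁]
  exact mul_ne_zero det_F det_F

end Circulant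

section Chebyshev

lemma two_mul_chebyshev_T_eval {R : Type*} [CommRing R] [Invertible (2 : R)] {x y : R}
    (h : x * y = 1) (m : ℕ) :
    2 * (Chebyshev.T R m).eval (⅟2 * (x + y)) = x ^ m + y ^ m := by
  rw [← dickson_one_one_eval_add_inv x y h, dickson_one_one_eq_chebyshev_T]
  simp

variable {n : ℕ} [NeZero n]

/-- `cosChar k = cos (2πk/n)` for `k : ZMod n`, written as a mean of additive characters. -/
noncomputable def cosChar (k : ZMod n) : ℂ :=
  ⅟2 * (ZMod.stdAddChar k + ZMod.stdAddChar (-k))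

lemma stdAddChar_mul_stdAddChar_neg (k : ZMod n) :
    (ZMod.stdAddChar k * ZMod.stdAddChar (-k) : ℂ) = 1 := by
  rw [← AddChar.map_add_eq_mul, add_neg_cancel, AddChar.map_zero_eq_one]

lemma cosChar_zero : cosChar (0 : ZMod n) = 1 := by
  simp [cosChar, ← two_mul]

lemma cosChar_natCast_mul (m : ℕ) (k : ZMod n) :
    cosChar ((m : ZMod n) * k) = (Chebyshev.T ℂ m).eval (cosChar k) := by
  refine mul_left_cancel₀ (two_ne_zero' ℂ) ?_
  rw [cosChar, cosChar, mul_invOf_cancel_left',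
    two_mul_chebyshev_T_eval (stdAddChar_mul_stdAddChar_neg k), ← AddChar.map_nsmul_eq_pow,
    ← AddChar.map_nsmul_eq_pow, nsmul_eq_mul, nsmul_eq_mul, mul_neg]

lemma prod_sub_stdAddChar (z : ℂ) : ∏ k : ZMod n, (z - ZMod.stdAddChar k) = z ^ n - 1 := by
  have primitive := Complex.isPrimitiveRoot_exp n (NeZero.ne n)
  have image_stdAddChar :
      Finset.univ.image (ZMod.stdAddChar : ZMod n → ℂ) = nthRootsFinset n (1 : ℂ) := by
    refine Finset.eq_of_subset_of_card_le (fun x hx => ?_) ?_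
    · obtain ⟨k, -, rfl⟩ := Finset.mem_image.1 hx
      rw [mem_nthRootsFinset (NeZero.pos n), ← AddChar.map_nsmul_eq_pow]
      simp
    · rw [Finset.card_image_of_injective _ ZMod.injective_stdAddChar, primitive.card_nthRootsFinset,
        Finset.card_univ, ZMod.card]
  have factored := congrArg (eval z) (X_pow_sub_one_eq_prod (NeZero.pos n) primitive)
  rw [← image_stdAddChar, Finset.prod_image ZMod.injective_stdAddChar.injOn] at factored
  simpa [eval_prod] using factored.symm

lemma prod_two_mul_sub_cosChar (w : ℂ) :
    ∏ k : ZMod n, 2 * (w - cosChar k) = 2 * ((Chebyshev.T ℂ n).eval w - 1) := by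
  obtain ⟨x, y, hxy, rfl⟩ : ∃ x y : ℂ, x * y = 1 ∧ ⅟2 * (x + y) = w := by
    obtain ⟨s, hs⟩ := IsAlgClosed.exists_pow_nat_eq (w ^ 2 - 1) two_pos
    exact ⟨w + s, w - s, by linear_combination -hs, by rw [invOf_eq_inv]; ring⟩
  have factor (k : ZMod n) : 2 * (⅟2 * (x + y) - cosChar k) =
      y * ((x - ZMod.stdAddChar k) * (x - ZMod.stdAddChar (-k))) := by
    rw [cosChar, ← mul_sub, mul_invOf_cancel_left']
    linear_combination -y * stdAddChar_mul_stdAddChar_neg k +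
      (ZMod.stdAddChar k + ZMod.stdAddChar (-k) - x) * hxy
  have prod_neg : ∏ k : ZMod n, (x - ZMod.stdAddChar (-k)) = x ^ n - 1 :=
    (Equiv.prod_comp (Equiv.neg (ZMod n)) fun k => x - ZMod.stdAddChar k).trans
      (prod_sub_stdAddChar x)
  calc ∏ k : ZMod n, 2 * (⅟2 * (x + y) - cosChar k)
      = y ^ n * ((x ^ n - 1) * (x ^ n - 1)) := by
        simp only [factor, Finset.prod_mul_distrib, prod_neg, prod_sub_stdAddChar,
          Finset.prod_const, Finset.card_univ, ZMod.card]
    _ = x ^ n + y ^ n - 2 := by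
        have : x ^ n * y ^ n = 1 := by rw [← mul_pow, hxy, one_pow]
        linear_combination (x ^ n - 2) * this
    _ = 2 * ((Chebyshev.T ℂ n).eval (⅟2 * (x + y)) - 1) := by
        rw [mul_sub, two_mul_chebyshev_T_eval hxy, mul_one]

lemma chebyshev_T_sub_one_eq_prod :
    Chebyshev.T ℂ n - 1 = (X - 1) * ∏ k ∈ ({0}ᶜ : Finset (ZMod n)), C 2 * (X - C (cosChar k)) := by
  refine Polynomial.funext fun w => mul_left_cancel₀ (two_ne_zero' ℂ) ?_
  have prod_eq := prod_two_mul_sub_cosChar (n := n) w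
  rw [Fintype.prod_eq_mul_prod_compl 0, cosChar_zero] at prod_eq
  simp only [eval_sub, eval_mul, eval_prod, eval_X, eval_C, eval_one]
  rw [← prod_eq, mul_assoc]

lemma prod_compl_two_mul_sub_cosChar {w : ℂ} (hw : w ≠ 1) :
    ∏ k ∈ ({0}ᶜ : Finset (ZMod n)), 2 * (w - cosChar k) =
      ((Chebyshev.T ℂ n).eval w - 1) / (w - 1) := by
  rw [eq_div_iff (sub_ne_zero.2 hw), mul_comm]
  simpa [eval_prod] using (congrArg (eval w) (chebyshev_T_sub_one_eq_prod (n := n))).symm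

lemma prod_compl_two_mul_one_sub_cosChar :
    ∏ k ∈ ({0}ᶜ : Finset (ZMod n)), 2 * (1 - cosChar k) = (n : ℂ) ^ 2 := by
  have deriv_eq := congrArg (eval 1 ∘ derivative) (chebyshev_T_sub_one_eq_prod (n := n))
  simpa [derivative_mul, Chebyshev.derivative_T_eval_one, eval_prod] using deriv_eq.symm

end Chebyshev

section GenPetersenLaplacian

variable {n k : ℕ} {R : Type*} [CommRing R]

/-- The function `δ_c + δ_{-c}` on `ZMod n`. If `2c ≠ 0`, the circulant matrix it generates is the
adjacency matrix of the graph joining `i` to `i ± c`. -/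
def symmDelta (R : Type*) [CommRing R] (c : ZMod n) : ZMod n → R :=
  Pi.single c 1 + Pi.single (-c) 1

lemma symmDelta_sub_apply {c : ZMod n} (hc : 2 * c ≠ 0) (i j : ZMod n) :
    symmDelta R c (i - j) = if i ≠ j ∧ (j = i + c ∨ i = j + c) then 1 else 0 := by
  have sub_eq_iff : i - j = c ↔ i = j + c := sub_eq_iff_eq_add'
  have sub_eq_neg_iff : i - j = -c ↔ j = i + c := by rw [← neg_sub, neg_inj, sub_eq_iff_eq_add']
  have ne_of_adj (h : j = i + c ∨ i = j + c) : i ≠ j := by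
    rintro rfl
    exact right_ne_zero_of_mul hc (by simpa using h)
  have not_both (h : i = j + c) : j ≠ i + c := by
    rintro rfl
    exact hc (by linear_combination -h)
  simp only [and_iff_right_of_imp ne_of_adj, symmDelta, Pi.add_apply, Pi.single_apply,
    sub_eq_iff, sub_eq_neg_iff]
  grind

lemma adjMatrix_genPetersen (hk : (2 * k : ZMod n) ≠ 0) :
    (genPetersen n k).adjMatrix R = Matrix.fromBlocks (.circulant (symmDelta R 1)) 1 1
      (.circulant (symmDelta R (k : ZMod n))) := by
  have two_ne_zero : (2 * 1 : ZMod n) ≠ 0 := by rw [mul_one]; exact left_ne_zero_of_mul hk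
  ext (i | i) (j | j) <;> rw [SimpleGraph.adjMatrix_apply]
  · simp [genPetersen, gpRel, symmDelta_sub_apply two_ne_zero, Matrix.circulant_apply]
  · simp [genPetersen, gpRel, Matrix.one_apply, eq_comm]
  · simp [genPetersen, gpRel, Matrix.one_apply]
  · simp [genPetersen, gpRel, symmDelta_sub_apply hk, Matrix.circulant_apply]

variable [NeZero n]

lemma sum_symmDelta_sub (c i : ZMod n) : ∑ j, symmDelta R c (i - j) = 2 := by
  have reindex : ∑ j, symmDelta R c (i - j) = ∑ j, symmDelta R c j :=
    Equiv.sum_comp (Equiv.subLeft i) (symmDelta R c)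
  rw [reindex]
  simp [symmDelta, Finset.sum_add_distrib, one_add_one_eq_two]

lemma degree_genPetersen (hk : (2 * k : ZMod n) ≠ 0) (a : ZMod n ⊕ ZMod n) :
    (genPetersen n k).degree a = 3 := by
  have degree_eq : ((genPetersen n k).degree a : ℤ) = ∑ b, (genPetersen n k).adjMatrix ℤ a b := by
    simp only [SimpleGraph.degree_eq_sum_if_adj, SimpleGraph.adjMatrix_apply]
  have row_sum : ∑ b, (genPetersen n k).adjMatrix ℤ a b = 3 := by
    rw [adjMatrix_genPetersen hk, Fintype.sum_sum_type]
    rcases a with i | i <;> simp [Matrix.circulant_apply, sum_symmDelta_sub, Matrix.one_apply]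
  exact_mod_cast degree_eq.trans row_sum

lemma lapMatrix_genPetersen (hk : (2 * k : ZMod n) ≠ 0) :
    (genPetersen n k).lapMatrix R =
      Matrix.fromBlocks (.circulant (Pi.single 0 3 - symmDelta R 1)) (-1) (-1)
        (.circulant (Pi.single 0 3 - symmDelta R (k : ZMod n))) := by
  have degMatrix_eq : (genPetersen n k).degMatrix R =
      Matrix.fromBlocks (.scalar _ 3) 0 0 (.scalar _ 3) := by
    simp [SimpleGraph.degMatrix, degree_genPetersen hk]
  rw [SimpleGraph.lapMatrix, degMatrix_eq, adjMatrix_genPetersen hk, Matrix.circulant_sub,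
    Matrix.circulant_sub, Matrix.circulant_single, sub_eq_add_neg, Matrix.fromBlocks_neg,
    Matrix.fromBlocks_add]
  simp only [zero_add, sub_eq_add_neg]

lemma lapMatrix_genPetersen_add_one (hk : (2 * k : ZMod n) ≠ 0) :
    (genPetersen n k).lapMatrix R + Matrix.of 1 =
      Matrix.fromBlocks (.circulant (Pi.single 0 3 - symmDelta R 1 + 1))
        (.circulant (-Pi.single 0 1 + 1)) (.circulant (-Pi.single 0 1 + 1))
        (.circulant (Pi.single 0 3 - symmDelta R (k : ZMod n) + 1)) := by
  have ones_eq : (Matrix.of 1 : Matrix (ZMod n ⊕ ZMod n) (ZMod n ⊕ ZMod n) R) =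
      Matrix.fromBlocks (.circulant 1) (.circulant 1) (.circulant 1) (.circulant 1) := by
    ext (i | i) (j | j) <;> rfl
  rw [lapMatrix_genPetersen hk, ones_eq, Matrix.fromBlocks_add]
  simp only [Matrix.circulant_add, Matrix.circulant_neg, Matrix.circulant_single_one]

open scoped ZMod

lemma dft_one_apply (j : ZMod n) : 𝓕 (1 : ZMod n → ℂ) j = if j = 0 then (n : ℂ) else 0 := by
  have := AddChar.sum_mulShift (-j) (ZMod.isPrimitive_stdAddChar n)
  simpa [ZMod.dft_apply] using this

lemma dft_single_apply (c : ZMod n) (a : ℂ) (j : ZMod n) :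
    𝓕 (Pi.single c a) j = ZMod.stdAddChar (-(c * j)) * a := by
  simp [ZMod.dft_apply, Pi.single_apply]

lemma dft_symmDelta_apply (c j : ZMod n) : 𝓕 (symmDelta ℂ c) j = 2 * cosChar (c * j) := by
  rw [cosChar, mul_invOf_cancel_left', symmDelta, map_add, Pi.add_apply, dft_single_apply,
    dft_single_apply, neg_mul, neg_neg, mul_one, mul_one, add_comm]

lemma dft_single_sub_symmDelta_add_one_apply (a : ℂ) (c j : ZMod n) :
    𝓕 (Pi.single 0 a - symmDelta ℂ c + 1) j =
      a - 2 * cosChar (c * j) + if j = 0 then (n : ℂ) else 0 := by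
  simp [dft_single_apply, dft_symmDelta_apply, dft_one_apply]

/-- The determinant of the `2 × 2` Fourier symbol of the Laplacian of `genPetersen n k` at the
frequency `θ`, as a polynomial in `cos θ`; it does not depend on `n`. -/
noncomputable def genPetersenSymbol (k : ℕ) : ℂ[X] :=
  (C 3 - C 2 * X) * (C 3 - C 2 * Chebyshev.T ℂ k) - 1

theorem card_mul_numSpanningTrees_genPetersen (hk : (2 * k : ZMod n) ≠ 0) :
    (n * numSpanningTrees (genPetersen n k) : ℂ) =
      ∏ j ∈ ({0}ᶜ : Finset (ZMod n)), (genPetersenSymbol k).eval (cosChar j) := by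
  let u : ZMod n → ℂ := Pi.single 0 3 - symmDelta ℂ 1 + 1
  let v : ZMod n → ℂ := -Pi.single 0 1 + 1
  let w : ZMod n → ℂ := Pi.single 0 3 - symmDelta ℂ (k : ZMod n) + 1
  have dft_v (j : ZMod n) : 𝓕 v j = -1 + if j = 0 then (n : ℂ) else 0 := by
    simp [v, dft_single_apply, dft_one_apply]
  have factor_zero : 𝓕 u 0 * 𝓕 w 0 - 𝓕 v 0 * 𝓕 v 0 = 4 * n := by
    simp only [u, w, dft_v, dft_single_sub_symmDelta_add_one_apply, mul_zero, cosChar_zero, if_true]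
    ring
  have factor {j : ZMod n} (hj : j ∈ ({0}ᶜ : Finset (ZMod n))) :
      𝓕 u j * 𝓕 w j - 𝓕 v j * 𝓕 v j = (genPetersenSymbol k).eval (cosChar j) := by
    have hj0 : j ≠ 0 := by simpa using hj
    simp only [u, w, dft_v, dft_single_sub_symmDelta_add_one_apply, one_mul, if_neg hj0,
      cosChar_natCast_mul, genPetersenSymbol, eval_sub, eval_mul, eval_C, eval_X, eval_one]
    ring
  have det_eq := det_lapMatrix_add_one (R := ℂ) (genPetersen n k)
  rw [lapMatrix_genPetersen_add_one hk, det_fromBlocks_circulant, Fintype.prod_eq_mul_prod_compl 0,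
    factor_zero, Finset.prod_congr rfl fun j => factor, Fintype.card_sum, ZMod.card] at det_eq
  have four_mul_ne_zero : (4 * n : ℂ) ≠ 0 :=
    mul_ne_zero (by norm_num) (Nat.cast_ne_zero.2 (NeZero.ne n))
  refine mul_left_cancel₀ four_mul_ne_zero ?_
  rw [det_eq]
  push_cast
  ring

end GenPetersenLaplacian

lemma ne_one_of_eq_X_sub_one_mul_prod {k : ℕ} {a : ℂ} {ι : Type*} [Fintype ι] {w : ι → ℂ}
    (hw : genPetersenSymbol k = C a * (X - 1) * ∏ s, (X - C (w s))) (s : ι) : w s ≠ 1 := by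
  intro hs
  have derivative_eq := congrArg (eval 1 ∘ derivative) hw
  have prod_eq_zero : ∏ s, (1 - w s) = 0 :=
    Finset.prod_eq_zero (Finset.mem_univ s) (sub_eq_zero.2 hs.symm)
  simp only [genPetersenSymbol, Function.comp_apply, derivative_sub, derivative_mul, derivative_C,
    derivative_X, derivative_one, eval_add, eval_sub, eval_mul, eval_prod, eval_C, eval_X,
    eval_one, eval_zero, Chebyshev.T_eval_one, Chebyshev.derivative_T_eval_one,
    Int.cast_natCast, prod_eq_zero, sub_self] at derivative_eq
  have succ_sq_eq_zero : ((1 + k ^ 2 : ℕ) : ℂ) = 0 := by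
    push_cast
    linear_combination -derivative_eq / 2
  exact absurd (Nat.cast_eq_zero.1 succ_sq_eq_zero) (by positivity)

lemma eval_genPetersenSymbol_eq_prod {k : ℕ} {w : Fin k → ℂ}
    (hw : genPetersenSymbol k = C (2 ^ (k + 1)) * (X - 1) * ∏ s, (X - C (w s))) (x : ℂ) :
    (genPetersenSymbol k).eval x = (-1) ^ (k + 1) * (2 * (1 - x)) * ∏ s, 2 * (w s - x) := by
  have eval_eq := congrArg (eval x) hw
  have prod_sub_comm : ∏ s, (x - w s) = (-1) ^ k * ∏ s, (w s - x) := by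
    simpa using Finset.prod_neg (s := Finset.univ) fun s => w s - x
  simp only [eval_sub, eval_mul, eval_prod, eval_X, eval_C, eval_one, prod_sub_comm] at eval_eq
  rw [eval_eq, Finset.prod_mul_distrib, Finset.prod_const, Finset.card_univ, Fintype.card_fin]
  ring

theorem spanning_trees_GP3_general (n k : ℕ) [NeZero n] (hk : ¬ n ∣ 2 * k) (w : Fin k → ℂ)
    (hw : genPetersenSymbol k = C (2 ^ (k + 1)) * (X - 1) * ∏ s, (X - C (w s))) :
    (numSpanningTrees (genPetersen n k) : ℂ) =
      (-1) ^ ((k + 1) * (n - 1)) * n *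
        ∏ s, ((Chebyshev.T ℂ n).eval (w s) - 1) / (w s - 1) := by
  have hk' : (2 * k : ZMod n) ≠ 0 := by
    rwa [← Nat.cast_two, ← Nat.cast_mul, Ne, ZMod.natCast_eq_zero_iff]
  refine mul_left_cancel₀ (Nat.cast_ne_zero.2 (NeZero.ne n) : (n : ℂ) ≠ 0) ?_
  calc (n * numSpanningTrees (genPetersen n k) : ℂ)
      = ∏ j ∈ ({0}ᶜ : Finset (ZMod n)),
          ((-1) ^ (k + 1) * (2 * (1 - cosChar j)) * ∏ s, 2 * (w s - cosChar j)) := by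
        simp only [card_mul_numSpanningTrees_genPetersen hk', eval_genPetersenSymbol_eq_prod hw]
    _ = (-1) ^ ((k + 1) * (n - 1)) * n ^ 2 *
          ∏ s, ((Chebyshev.T ℂ n).eval (w s) - 1) / (w s - 1) := by
        rw [Finset.prod_mul_distrib, Finset.prod_mul_distrib, Finset.prod_comm,
          prod_compl_two_mul_one_sub_cosChar, Finset.prod_const, ← pow_mul, Finset.card_compl,
          Finset.card_singleton, ZMod.card]
        simp only [prod_compl_two_mul_sub_cosChar (ne_one_of_eq_X_sub_one_mul_prod hw _)]
    _ = _ := by ring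

lemma genPetersenSymbol_three :
    genPetersenSymbol 3 = C 4 * (X - 1) * (C 4 * X ^ 3 - C 2 * X ^ 2 - C 5 * X - C 2) := by
  have T_three : Chebyshev.T ℂ (3 : ℕ) = 4 * X ^ 3 - 3 * X := by
    have T_two_add_one := Chebyshev.T_add_one ℂ 2
    norm_num only [Chebyshev.T_two, Chebyshev.T_one] at T_two_add_one
    rw [Nat.cast_ofNat, T_two_add_one]
    ring
  rw [genPetersenSymbol, T_three]
  simp only [map_ofNat]
  ring

/-- If `w_1, w_2, w_3` are the roots (with multiplicity) of
`4X³ − 2X² − 5X − 2`, then `τ(GP(n,3)) = n·∏_{s=1}^{3}(T_n(w_s) − 1)/(w_s − 1)`. -/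
theorem spanning_trees_GP3 (n : ℕ) (hn : 7 ≤ n) (w : Fin 3 → ℂ)
    (hw : (C (4 : ℂ)) * X ^ 3 - C 2 * X ^ 2 - C 5 * X - C 2 =
      C (4 : ℂ) * ∏ s : Fin 3, (X - C (w s))) :
    (numSpanningTrees (genPetersen n 3) : ℂ) =
      n * ∏ s : Fin 3,
        ((Polynomial.Chebyshev.T ℂ n).eval (w s) - 1) / (w s - 1) := by
  have : NeZero n := ⟨by lia⟩
  have not_dvd : ¬ n ∣ 2 * 3 := fun h => absurd (Nat.le_of_dvd (by norm_num) h) (by lia)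
  have factored : genPetersenSymbol 3 = C (2 ^ (3 + 1)) * (X - 1) * ∏ s, (X - C (w s)) := by
    rw [genPetersenSymbol_three, hw, mul_mul_mul_comm, ← mul_assoc, ← C_mul]
    norm_num only
  have sign_eq_one : (-1 : ℂ) ^ ((3 + 1) * (n - 1)) = 1 :=
    ((by decide : Even (3 + 1)).mul_right _).neg_one_pow
  rw [spanning_trees_GP3_general n 3 not_dvd w factored, sign_eq_one, one_mul]
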